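/- For any λ > 0 and μ > 0, the Model I penalized objective f and its smoothed DC approximation f_μ satisfy f_μ(x¹,…,x^k) ≤ f(x¹,…,x^k) ≤ f_μ(x¹,…,x^k) + m·k·(1 + λ/2)·μ·‖F‖² for all x¹,…,x^k ∈ ℝⁿ, where ‖F‖ = sup{‖q‖ : q ∈ F}. -/

import Mathlib

open scoped RealInnerProductSpace

/-- The support function `σ_F` of a set `F ⊆ ℝⁿ`. -/
noncomputable def suppF {n : ℕ} (F : Set (EuclideanSpace ℝ (Fin n)))
    (x : EuclideanSpace ℝ (Fin n)) : ℝ :=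
  sSup ((fun y => ⟪x, y⟫) '' F)

/-- Minimum of finitely many real numbers indexed by `Fin m`, `m ≥ 1`. -/
noncomputable def fmin {m : ℕ} (hm : 1 ≤ m) (α : Fin m → ℝ) : ℝ :=
  Finset.univ.inf' (Finset.univ_nonempty_iff.mpr ⟨⟨0, hm⟩⟩) α

/-- Maximum of finitely many real numbers indexed by `Fin m`, `m ≥ 1`. -/
noncomputable def fmax {m : ℕ} (hm : 1 ≤ m) (α : Fin m → ℝ) : ℝ :=
  Finset.univ.sup' (Finset.univ_nonempty_iff.mpr ⟨⟨0, hm⟩⟩) α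

/-!
With `c i ℓ = σ_F(xˡ - aⁱ)`, each minimum in the penalized objective is the total minus the
largest "all but one" sum, so the objective equals `(2 + λ) ∑ᵢ ∑ₗ c i ℓ` minus the very maxima that
appear in the smoothed objective. The difference of the two objectives is therefore `(2 + λ)` times
the sum over all pairs of the error made in smoothing `σ_F`. Completing the square identifies the
smoothing of `σ_F(x)` as `sup {⟨x, q⟩ - (μ/2) ‖q‖² : q ∈ F}`, so each error lies in
`[0, (μ/2) ‖F‖²]`.
-/

section FiniteExtrema

variable {ι κ M : Type*} [DecidableEq ι] [DecidableEq κ]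

theorem inf'_eq_sum_sub_sup'_sum_erase [AddCommGroup M] [LinearOrder M] [IsOrderedAddMonoid M]
    {s : Finset ι} (hs : s.Nonempty) (α : ι → M) :
    s.inf' hs α = ∑ i ∈ s, α i - s.sup' hs (fun t => ∑ i ∈ s.erase t, α i) := by
  apply le_antisymm
  · rw [le_sub_comm]
    refine Finset.sup'_le hs _ fun t ht => ?_
    rw [Finset.sum_erase_eq_sub ht]
    exact sub_le_sub_left (Finset.inf'_le α ht) _
  · refine Finset.le_inf' hs α fun t ht => ?_
    rw [sub_le_comm, ← Finset.sum_erase_eq_sub ht]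
    exact Finset.le_sup' (fun t => ∑ i ∈ s.erase t, α i) ht

theorem sum_inf'_add_inf'_sum_add_mul_sum_inf'_eq [CommRing M] [LinearOrder M]
    [IsOrderedAddMonoid M] {s : Finset ι} {t : Finset κ} (hs : s.Nonempty) (ht : t.Nonempty)
    (lam : M) (c : ι → κ → M) :
    ∑ i ∈ s, t.inf' ht (fun ℓ => c i ℓ) + s.inf' hs (fun i => ∑ ℓ ∈ t, c i ℓ)
        + lam * ∑ ℓ ∈ t, s.inf' hs (fun i => c i ℓ)
      = (2 + lam) * ∑ i ∈ s, ∑ ℓ ∈ t, c i ℓ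
        - ∑ i ∈ s, t.sup' ht (fun r => ∑ ℓ ∈ t.erase r, c i ℓ)
        - lam * ∑ ℓ ∈ t, s.sup' hs (fun r => ∑ i ∈ s.erase r, c i ℓ)
        - s.sup' hs (fun r => ∑ i ∈ s.erase r, ∑ ℓ ∈ t, c i ℓ) := by
  simp only [inf'_eq_sum_sub_sup'_sum_erase, Finset.sum_sub_distrib]
  rw [Finset.sum_comm (s := t)]
  ring

end FiniteExtrema

theorem le_infDist_sq {α : Type*} [PseudoMetricSpace α] {s : Set α} (hs : s.Nonempty) {x : α}
    {r : ℝ} : r ≤ Metric.infDist x s ^ 2 ↔ ∀ ⦃y⦄, y ∈ s → r ≤ dist x y ^ 2 := by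
  simp only [← Real.sqrt_le_left Metric.infDist_nonneg, ← Real.sqrt_le_left dist_nonneg,
    Metric.le_infDist hs]

theorem norm_le_sSup_norm_image {E : Type*} [SeminormedAddGroup E] {s : Set E}
    (hs : Bornology.IsBounded s) {q : E} (hq : q ∈ s) : ‖q‖ ≤ sSup (norm '' s) :=
  le_csSup (lipschitzWith_one_norm.isBounded_image hs).bddAbove ⟨q, hq, rfl⟩

section SupportFunction

variable {E : Type*} [NormedAddCommGroup E] [InnerProductSpace ℝ E] {F : Set E} {μ : ℝ}

/-- The support function `σ_F` of a subset `F` of a real inner product space. It has the junk value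
`0` where the supremum is infinite or `F` is empty. -/
noncomputable def supportFunction (F : Set E) (x : E) : ℝ :=
  sSup ((fun y => ⟪x, y⟫) '' F)

/-- Nesterov's smoothing of the support function `σ_F` with parameter `μ`, in closed form. -/
noncomputable def smoothedSupportFunction (F : Set E) (μ : ℝ) (x : E) : ℝ :=
  μ / 2 * (‖μ⁻¹ • x‖ ^ 2 - Metric.infDist (μ⁻¹ • x) F ^ 2)

theorem inner_le_supportFunction (hFb : Bornology.IsBounded F) (x : E) {q : E} (hq : q ∈ F) :
    ⟪x, q⟫ ≤ supportFunction F x :=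
  le_csSup ((innerSL ℝ x).lipschitz.isBounded_image hFb).bddAbove ⟨q, hq, rfl⟩

theorem inner_sub_mul_norm_sq_eq (hμ : μ ≠ 0) (x q : E) :
    ⟪x, q⟫ - μ / 2 * ‖q‖ ^ 2 = μ / 2 * (‖μ⁻¹ • x‖ ^ 2 - dist (μ⁻¹ • x) q ^ 2) := by
  rw [dist_eq_norm, norm_sub_sq_real, real_inner_smul_left]
  field_simp
  ring

theorem isLUB_smoothedSupportFunction (hF : F.Nonempty) (hμ : 0 < μ) (x : E) :
    IsLUB ((fun q => ⟪x, q⟫ - μ / 2 * ‖q‖ ^ 2) '' F) (smoothedSupportFunction F μ x) := by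
  have hμ2 : 0 < μ / 2 := half_pos hμ
  simp only [inner_sub_mul_norm_sq_eq hμ.ne', smoothedSupportFunction]
  constructor
  · rintro _ ⟨q, hq, rfl⟩
    have h_dist : Metric.infDist (μ⁻¹ • x) F ≤ dist (μ⁻¹ • x) q :=
      Metric.infDist_le_dist_of_mem hq
    have h_nonneg : 0 ≤ Metric.infDist (μ⁻¹ • x) F := Metric.infDist_nonneg
    dsimp only
    gcongr
  · intro b hb
    rw [← le_div_iff₀' hμ2, sub_le_comm, le_infDist_sq hF]
    intro q hq
    rw [sub_le_comm, le_div_iff₀' hμ2]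
    exact hb ⟨q, hq, rfl⟩

theorem smoothedSupportFunction_le (hF : F.Nonempty) (hFb : Bornology.IsBounded F) (hμ : 0 < μ)
    (x : E) : smoothedSupportFunction F μ x ≤ supportFunction F x := by
  refine (isLUB_smoothedSupportFunction hF hμ x).2 ?_
  rintro _ ⟨q, hq, rfl⟩
  have h_sq : 0 ≤ μ / 2 * ‖q‖ ^ 2 := by positivity
  exact (sub_le_self _ h_sq).trans (inner_le_supportFunction hFb x hq)

theorem supportFunction_le_smoothedSupportFunction_add (hF : F.Nonempty)
    (hFb : Bornology.IsBounded F) (hμ : 0 < μ) (x : E) :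
    supportFunction F x ≤ smoothedSupportFunction F μ x + μ / 2 * sSup (norm '' F) ^ 2 := by
  refine csSup_le (hF.image _) ?_
  rintro _ ⟨q, hq, rfl⟩
  calc ⟪x, q⟫ ≤ smoothedSupportFunction F μ x + μ / 2 * ‖q‖ ^ 2 :=
        sub_le_iff_le_add.1 ((isLUB_smoothedSupportFunction hF hμ x).1 ⟨q, hq, rfl⟩)
    _ ≤ smoothedSupportFunction F μ x + μ / 2 * sSup (norm '' F) ^ 2 := by
        gcongr
        exact norm_le_sSup_norm_image hFb hq

end SupportFunction

section ModelI

variable {E ι κ : Type*} [NormedAddCommGroup E] [InnerProductSpace ℝ E]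
  [Fintype ι] [Nonempty ι] [Fintype κ] [Nonempty κ]

/-- The Model I penalized objective `f` with nodes `a`, penalty parameter `lam` and centers `X`. -/
noncomputable def penalizedObjective (F : Set E) (lam : ℝ) (a : ι → E) (X : κ → E) : ℝ :=
  ∑ i, Finset.univ.inf' Finset.univ_nonempty (fun ℓ => supportFunction F (X ℓ - a i))
    + Finset.univ.inf' Finset.univ_nonempty (fun i => ∑ ℓ, supportFunction F (X ℓ - a i))
    + lam * ∑ ℓ, Finset.univ.inf' Finset.univ_nonempty (fun i => supportFunction F (X ℓ - a i))

variable [DecidableEq ι] [DecidableEq κ]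

/-- The smoothed approximation `f_μ` of `penalizedObjective`, a difference of convex functions when
`F` is convex. -/
noncomputable def smoothedObjective (F : Set E) (lam μ : ℝ) (a : ι → E) (X : κ → E) : ℝ :=
  ((2 + lam) * μ / 2) * ∑ i, ∑ ℓ, ‖μ⁻¹ • (X ℓ - a i)‖ ^ 2
    - ((2 + lam) * μ / 2) * ∑ i, ∑ ℓ, (Metric.infDist (μ⁻¹ • (X ℓ - a i)) F) ^ 2
    - ∑ i, Finset.univ.sup' Finset.univ_nonempty
        (fun t => ∑ ℓ ∈ Finset.univ.erase t, supportFunction F (X ℓ - a i))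
    - lam * ∑ ℓ, Finset.univ.sup' Finset.univ_nonempty
        (fun t => ∑ i ∈ Finset.univ.erase t, supportFunction F (X ℓ - a i))
    - Finset.univ.sup' Finset.univ_nonempty
        (fun t => ∑ i ∈ Finset.univ.erase t, ∑ ℓ, supportFunction F (X ℓ - a i))

theorem penalizedObjective_sub_smoothedObjective (F : Set E) (lam μ : ℝ) (a : ι → E) (X : κ → E) :
    penalizedObjective F lam a X - smoothedObjective F lam μ a X
      = (2 + lam) * ∑ i, ∑ ℓ,
          (supportFunction F (X ℓ - a i) - smoothedSupportFunction F μ (X ℓ - a i)) := by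
  rw [penalizedObjective, sum_inf'_add_inf'_sum_add_mul_sum_inf'_eq]
  simp only [smoothedObjective, smoothedSupportFunction, Finset.sum_sub_distrib, ← Finset.mul_sum]
  ring

theorem stmt_7_general {F : Set E} (hF : F.Nonempty) (hFb : Bornology.IsBounded F) {lam μ : ℝ}
    (hlam : -2 ≤ lam) (hμ : 0 < μ) (a : ι → E) (X : κ → E) :
    smoothedObjective F lam μ a X ≤ penalizedObjective F lam a X ∧
      penalizedObjective F lam a X ≤ smoothedObjective F lam μ a X
        + (Fintype.card ι : ℝ) * (Fintype.card κ : ℝ) * (1 + lam / 2) * μ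
          * sSup (norm '' F) ^ 2 := by
  have h_coeff : 0 ≤ 2 + lam := by linarith
  rw [← sub_nonneg, ← sub_le_iff_le_add', penalizedObjective_sub_smoothedObjective]
  constructor
  · exact mul_nonneg h_coeff <| Finset.sum_nonneg fun i _ => Finset.sum_nonneg fun ℓ _ =>
      sub_nonneg.2 (smoothedSupportFunction_le hF hFb hμ _)
  · calc
      _ ≤ (2 + lam) * ∑ _i : ι, ∑ _ℓ : κ, μ / 2 * sSup (norm '' F) ^ 2 := by
          gcongr with i _ ℓ _
          exact sub_le_iff_le_add'.2 (supportFunction_le_smoothedSupportFunction_add hF hFb hμ _)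
      _ = _ := by
          simp only [Finset.sum_const, Finset.card_univ, nsmul_eq_mul]
          ring

end ModelI

theorem stmt_7 {n m k : ℕ} (hm : 1 ≤ m) (hk : 1 ≤ k)
    (a : Fin m → EuclideanSpace ℝ (Fin n))
    (F : Set (EuclideanSpace ℝ (Fin n)))
    (hF : F.Nonempty) (hFc : IsClosed F) (hFb : Bornology.IsBounded F)
    (hFconv : Convex ℝ F) (hF0 : (0 : EuclideanSpace ℝ (Fin n)) ∈ interior F)
    (lam μ : ℝ) (hlam : 0 < lam) (hμ : 0 < μ)
    (X : Fin k → EuclideanSpace ℝ (Fin n)) :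
    (((2 + lam) * μ / 2) * ∑ i, ∑ ℓ, ‖μ⁻¹ • (X ℓ - a i)‖ ^ 2
        - ((2 + lam) * μ / 2) * ∑ i, ∑ ℓ, (Metric.infDist (μ⁻¹ • (X ℓ - a i)) F) ^ 2
        - ∑ i, fmax hk (fun t => ∑ ℓ ∈ Finset.univ.erase t, suppF F (X ℓ - a i))
        - lam * ∑ ℓ, fmax hm (fun t => ∑ i ∈ Finset.univ.erase t, suppF F (X ℓ - a i))
        - fmax hm (fun t => ∑ i ∈ Finset.univ.erase t, ∑ ℓ, suppF F (X ℓ - a i)))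
      ≤ (∑ i, fmin hk (fun ℓ => suppF F (X ℓ - a i))
          + fmin hm (fun i => ∑ ℓ, suppF F (X ℓ - a i))
          + lam * ∑ ℓ, fmin hm (fun i => suppF F (X ℓ - a i)))
    ∧ (∑ i, fmin hk (fun ℓ => suppF F (X ℓ - a i))
          + fmin hm (fun i => ∑ ℓ, suppF F (X ℓ - a i))
          + lam * ∑ ℓ, fmin hm (fun i => suppF F (X ℓ - a i)))
      ≤ (((2 + lam) * μ / 2) * ∑ i, ∑ ℓ, ‖μ⁻¹ • (X ℓ - a i)‖ ^ 2
          - ((2 + lam) * μ / 2) * ∑ i, ∑ ℓ, (Metric.infDist (μ⁻¹ • (X ℓ - a i)) F) ^ 2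
          - ∑ i, fmax hk (fun t => ∑ ℓ ∈ Finset.univ.erase t, suppF F (X ℓ - a i))
          - lam * ∑ ℓ, fmax hm (fun t => ∑ i ∈ Finset.univ.erase t, suppF F (X ℓ - a i))
          - fmax hm (fun t => ∑ i ∈ Finset.univ.erase t, ∑ ℓ, suppF F (X ℓ - a i)))
        + (m : ℝ) * (k : ℝ) * (1 + lam / 2) * μ * (sSup (norm '' F)) ^ 2 := by
  have : Nonempty (Fin m) := ⟨⟨0, hm⟩⟩
  have : Nonempty (Fin k) := ⟨⟨0, hk⟩⟩
  simpa only [Fintype.card_fin] using! stmt_7_general hF hFb (by linarith) hμ a X
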